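/- arXiv:2504.00807 — 5 statements merged into one kernel-verified Lean document; each statement's English description precedes it below -/
import Mathlib

section
/- Let T = (V, root, par) be a leafless, locally finite rooted directed tree of finite branching index. Then the bounded Cesàro operator C_T on ℓ²(V) is essentially normal: the self-commutator C_T* C_T − C_T C_T* is a compact operator on ℓ²(V). -/
noncomputable section

open scoped ENNReal

/-- A rooted directed tree encoded by a vertex set `V`, a root, and a parent map. -/
structure TreeData (V : Type) where
  root : V
  par : V → V
  par_root : par root = root
  hroot : ∀ v : V, ∃ n : ℕ, par^[n] v = root

namespace TreeData

variable {V : Type}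

open scoped Classical in
/-- The depth of a vertex: the least `n` with `par^[n] v = root`. -/
def dep (T : TreeData V) (v : V) : ℕ := Nat.find (T.hroot v)

/-- The Cesàro map `Λ_T`. -/
def cesaro (T : TreeData V) (f : V → ℂ) : V → ℂ := fun v =>
  ((T.dep v : ℂ) + 1)⁻¹ * ∑ j ∈ Finset.range (T.dep v + 1), f (T.par^[j] v)

/-- The `n`-th level `Chi^⟨n⟩(root)`: vertices of depth `n`. -/
def level (T : TreeData V) (n : ℕ) : Set V := {v : V | T.dep v = n}

/-- The set of children of a vertex. -/
def chi (T : TreeData V) (u : V) : Set V := {v : V | v ≠ T.root ∧ T.par v = u}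

end TreeData

/-- The Hilbert space `ℓ²(V)` of square-summable complex functions on `V`. -/
abbrev L2 (V : Type) : Type := lp (fun _ : V => ℂ) 2

/-- A branching vertex: a vertex with at least two children. -/
def TreeData.branching {V : Type} (T : TreeData V) (v : V) : Prop := 2 ≤ (T.chi v).encard

open scoped Classical in
theorem hs_compact {V : Type} (D : L2 V →L[ℂ] L2 V)
    (h : Summable fun v : V => ‖D (lp.single 2 v (1:ℂ))‖ ^ 2) : IsCompactOperator ⇑D := by
  let R : V → (L2 V →L[ℂ] L2 V) := fun v =>
    (ContinuousLinearMap.toSpanSingleton ℂ (D (lp.single 2 v (1:ℂ)))).comp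
      (innerSL ℂ (lp.single 2 v (1:ℂ) : L2 V))
  have hRa : ∀ v f, R v f = f v • D (lp.single 2 v (1:ℂ)) := by
    intro v f
    simp only [R, ContinuousLinearMap.comp_apply, ContinuousLinearMap.toSpanSingleton_apply,
      innerSL_apply_apply, lp.inner_single_left]
    simp
  have hRc : ∀ v, IsCompactOperator ⇑(R v) := by
    intro v
    exact (isCompactOperator_of_locallyCompactSpace_rng
      (ContinuousLinearMap.toSpanSingleton ℂ (D (lp.single 2 v (1:ℂ))))).comp_clm
      (innerSL ℂ (lp.single 2 v (1:ℂ) : L2 V))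
  have hbound : ∀ S : Finset V, ‖∑ v ∈ S, R v‖ ≤
      Real.sqrt (∑ v ∈ S, ‖D (lp.single 2 v (1:ℂ))‖ ^ 2) := by
    intro S
    refine ContinuousLinearMap.opNorm_le_bound _ (Real.sqrt_nonneg _) fun f => ?_
    rw [sum_apply]
    have h2 : ∑ v ∈ S, ‖f v‖ ^ 2 ≤ ‖f‖ ^ 2 := by
      have := lp.sum_rpow_le_norm_rpow (p := 2) (by norm_num) f S
      simpa using this
    calc ‖∑ v ∈ S, R v f‖ ≤ ∑ v ∈ S, ‖R v f‖ := norm_sum_le _ _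
      _ = ∑ v ∈ S, ‖D (lp.single 2 v (1:ℂ))‖ * ‖f v‖ := by
          refine Finset.sum_congr rfl fun v _ => ?_
          rw [hRa, norm_smul, mul_comm]
      _ ≤ Real.sqrt (∑ v ∈ S, ‖D (lp.single 2 v (1:ℂ))‖ ^ 2) * Real.sqrt (∑ v ∈ S, ‖f v‖ ^ 2) :=
          Real.sum_mul_le_sqrt_mul_sqrt _ _ _
      _ ≤ _ := by
          exact mul_le_mul_of_nonneg_left (Real.sqrt_le_iff.2 ⟨norm_nonneg _, h2⟩)
            (Real.sqrt_nonneg _)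
  have hsum : Summable R := by
    rw [summable_iff_vanishing_norm]
    intro ε hε
    obtain ⟨S, hS⟩ := summable_iff_vanishing_norm.1 h (ε ^ 2) (by positivity)
    refine ⟨S, fun t ht => (hbound t).trans_lt ?_⟩
    rw [Real.sqrt_lt' hε]
    exact (le_abs_self _).trans_lt (hS t ht)
  have hD : ∑' v, R v = D := by
    ext1 f
    have h1 : HasSum (fun v => R v f) ((∑' v, R v) f) :=
      hsum.hasSum.mapL (ContinuousLinearMap.apply ℂ (L2 V) f)
    have h2 : HasSum (fun v => D (lp.single 2 v (f v))) (D f) :=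
      (lp.hasSum_single (by norm_num) f).mapL D
    refine h1.unique ?_
    convert h2 using 2 with v
    rw [hRa, ← map_smul, ← lp.single_smul]
    simp
  rw [← hD]
  refine isCompactOperator_of_tendsto (l := Filter.atTop) hsum.hasSum (Filter.Eventually.of_forall fun S => ?_)
  exact Submodule.sum_mem (compactOperator (RingHom.id ℂ) (L2 V) (L2 V)) (t := S) (f := fun v => (R v)) (fun v _ => hRc v)

theorem tele_bound (m : ℕ) (S : ℝ) (h : HasSum (fun n : ℕ => (((m:ℝ) + n + 1)⁻¹) ^ 2) S) :
    |S - ((m:ℝ) + 1)⁻¹| ≤ (((m:ℝ) + 1)⁻¹) ^ 2 := by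
  have key : ∀ n : ℕ, |∑ i ∈ Finset.range n, (((m:ℝ) + i + 1)⁻¹) ^ 2
      - (((m:ℝ) + 1)⁻¹ - ((m:ℝ) + n + 1)⁻¹)| ≤ (((m:ℝ) + 1)⁻¹) ^ 2 - (((m:ℝ) + n + 1)⁻¹) ^ 2 := by
    intro n
    induction n with
    | zero => simp
    | succ n ih =>
      rw [Finset.sum_range_succ]
      rw [abs_le] at ih ⊢
      have hx : (0:ℝ) < (m:ℝ) + n + 1 := by positivity
      push_cast
      have e : (m:ℝ) + (n + 1) + 1 = ((m:ℝ) + n + 1) + 1 := by ring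
      rw [e]
      generalize (m:ℝ) + n + 1 = x at *
      have h1 : x⁻¹ ^ 2 - (x⁻¹ - (x+1)⁻¹) = x⁻¹ ^ 2 * (x+1)⁻¹ := by field_simp; ring
      have h2 : (x⁻¹ ^2 - (x+1)⁻¹ ^ 2) - x⁻¹ ^ 2 * (x+1)⁻¹ = x⁻¹ ^ 2 * (x+1)⁻¹ ^ 2 * x := by
        field_simp; ring
      have h3 : 0 ≤ x⁻¹ ^ 2 * (x+1)⁻¹ := by positivity
      have h4 : 0 ≤ x⁻¹ ^ 2 * (x+1)⁻¹ ^ 2 * x := by positivity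
      constructor <;> linarith [ih.1, ih.2]
  have t0 : Filter.Tendsto (fun n : ℕ => ((m:ℝ) + n + 1)⁻¹) Filter.atTop (nhds 0) := by
    apply Filter.Tendsto.inv_tendsto_atTop
    apply Filter.tendsto_atTop_add_const_right
    exact Filter.tendsto_atTop_add_const_left _ _ tendsto_natCast_atTop_atTop
  have t1 := ((h.tendsto_sum_nat.sub (t0.const_sub ((m:ℝ) + 1)⁻¹)).abs)
  have t2 := (t0.pow 2).const_sub ((((m:ℝ) + 1)⁻¹) ^ 2)
  simpa using le_of_tendsto_of_tendsto' t1 t2 key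

namespace TreeData
variable {V : Type} (T : TreeData V)

theorem dep_spec (v : V) : T.par^[T.dep v] v = T.root := by
  classical exact Nat.find_spec (T.hroot v)

theorem dep_le {v : V} {n : ℕ} (h : T.par^[n] v = T.root) : T.dep v ≤ n := by
  classical exact Nat.find_min' (T.hroot v) h

theorem dep_root : T.dep T.root = 0 := Nat.le_zero.1 (T.dep_le rfl)

theorem dep_succ {v : V} (h : v ≠ T.root) : T.dep v = T.dep (T.par v) + 1 := by
  apply le_antisymm
  · exact T.dep_le (by rw [Function.iterate_succ_apply]; exact T.dep_spec _)
  · rcases hn : T.dep v with _ | n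
    · exact absurd (by simpa [hn] using T.dep_spec v) h
    · have := T.dep_spec v
      rw [hn, Function.iterate_succ_apply] at this
      have := T.dep_le this
      omega

theorem dep_par (v : V) : T.dep (T.par v) = T.dep v - 1 := by
  by_cases h : v = T.root
  · subst h; rw [T.par_root, T.dep_root]
  · rw [T.dep_succ h]; rfl

theorem dep_iter (v : V) (j : ℕ) : T.dep (T.par^[j] v) = T.dep v - j := by
  induction j with
  | zero => rfl
  | succ j ih => rw [Function.iterate_succ_apply', T.dep_par, ih]; omega

theorem iter_big (v : V) (j : ℕ) (h : T.dep v ≤ j) : T.par^[j] v = T.root := by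
  obtain ⟨k, rfl⟩ := Nat.exists_eq_add_of_le h
  rw [add_comm, Function.iterate_add_apply, T.dep_spec]
  exact Function.iterate_fixed T.par_root k

/-- `w` is an ancestor of `u`. -/
def anc (w u : V) : Prop := ∃ j, T.par^[j] u = w

variable {T}

theorem anc.eq {w u : V} (h : T.anc w u) :
    T.dep w ≤ T.dep u ∧ T.par^[T.dep u - T.dep w] u = w := by
  obtain ⟨j, rfl⟩ := h
  rw [T.dep_iter]
  refine ⟨Nat.sub_le _ _, ?_⟩
  rcases le_total j (T.dep u) with h | h
  · rw [Nat.sub_sub_self h]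
  · rw [T.iter_big u j h, T.iter_big]; omega

theorem anc.trans {a b c : V} (h : T.anc a b) (h' : T.anc b c) : T.anc a c := by
  obtain ⟨i, rfl⟩ := h
  obtain ⟨j, rfl⟩ := h'
  exact ⟨i + j, Function.iterate_add_apply _ _ _ _⟩

theorem anc.comp {a b c : V} (h : T.anc a c) (h' : T.anc b c) : T.anc a b ∨ T.anc b a := by
  obtain ⟨i, rfl⟩ := h
  obtain ⟨j, rfl⟩ := h'
  rcases le_total i j with h | h
  · right; refine ⟨j - i, ?_⟩
    rw [← Function.iterate_add_apply, Nat.sub_add_cancel h]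
  · left; refine ⟨i - j, ?_⟩
    rw [← Function.iterate_add_apply, Nat.sub_add_cancel h]

open scoped Classical in
theorem cesaro_single (w u : V) : T.cesaro ⇑(lp.single 2 w (1:ℂ) : L2 V) u =
    if T.anc w u then ((T.dep u : ℂ) + 1)⁻¹ else 0 := by
  unfold cesaro
  simp only [lp.coeFn_single, Pi.single_apply]
  split_ifs with h
  · rw [Finset.sum_eq_single (T.dep u - T.dep w)]
    · simp [h.eq.2]
    · intro j hj hne
      rw [if_neg]
      rintro rfl
      apply hne
      rw [T.dep_iter]
      have := Finset.mem_range.1 hj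
      omega
    · intro hh; simp at hh
  · rw [Finset.sum_eq_zero, mul_zero]
    intro j _
    rw [if_neg]
    exact fun hh => h ⟨j, hh⟩

/-- beyond the branching depth descendants form a ray -/
theorem ray {B : ℕ} (hB : ∀ v : V, T.branching v → T.dep v ≤ B) (c : V → V)
    (hc : ∀ u, c u ∈ T.chi u) {v : V} (hv : B < T.dep v) (j : ℕ) :
    T.dep (c^[j] v) = T.dep v + j ∧ ∀ w, T.par^[j] w = v → w = c^[j] v := by
  induction j with
  | zero => exact ⟨rfl, fun w hw => hw⟩
  | succ j ih =>
    obtain ⟨ih1, ih2⟩ := ih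
    have hcj := hc (c^[j] v)
    rw [Function.iterate_succ_apply']
    refine ⟨by rw [T.dep_succ hcj.1, hcj.2, ih1]; rfl, fun w hw => ?_⟩
    rw [Function.iterate_succ_apply] at hw
    have hp := ih2 _ hw
    have hwr : w ≠ T.root := by
      rintro rfl
      rw [T.par_root] at hp
      rw [← hp, T.dep_root] at ih1
      omega
    by_contra hne
    have hbr : T.branching (c^[j] v) := by
      unfold branching
      have := Set.encard_le_encard (s := {w, c (c^[j] v)}) (t := T.chi (c^[j] v)) (by
        rintro x (rfl | rfl)
        · exact ⟨hwr, hp⟩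
        · exact hcj)
      rwa [Set.encard_pair hne] at this
    have := hB _ hbr
    omega

theorem par_child (c : V → V) (hc : ∀ u, c u ∈ T.chi u) (v : V) (j : ℕ) :
    T.par^[j] (c^[j] v) = v :=
  (Function.LeftInverse.iterate (fun u => (hc u).2) j) v

theorem anc_child (c : V → V) (hc : ∀ u, c u ∈ T.chi u) (v : V) {i j : ℕ} (h : i ≤ j) :
    T.anc (c^[i] v) (c^[j] v) := by
  refine ⟨j - i, ?_⟩
  obtain ⟨k, rfl⟩ := Nat.exists_eq_add_of_le h
  rw [add_comm i k, Function.iterate_add_apply]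
  simp only [Nat.add_sub_cancel]
  exact par_child c hc _ _

end TreeData
namespace TreeData
variable {V : Type} {T : TreeData V}

open scoped Classical in
theorem entry_bound {B : ℕ} (hB : ∀ v : V, T.branching v → T.dep v ≤ B) (c : V → V)
    (hc : ∀ u, c u ∈ T.chi u)
    (C : L2 V →L[ℂ] L2 V) (hC : ∀ (f : L2 V) (v : V), C f v = T.cesaro ⇑f v) (u v : V)
    (huv : T.anc u v → T.anc v u) (hu : B < T.dep u) :
    ‖((ContinuousLinearMap.adjoint C * C - C * ContinuousLinearMap.adjoint C)
      (lp.single 2 u (1:ℂ))) v‖ ≤ ((B:ℝ) + 1) * (((T.dep u:ℝ) + 1)⁻¹ * ((T.dep v:ℝ) + 1)⁻¹) := by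
  have hCE : ∀ w x : V, C (lp.single 2 w (1:ℂ)) x =
      ((if T.anc w x then ((T.dep x : ℝ) + 1)⁻¹ else 0 : ℝ) : ℂ) := by
    intro w x
    rw [hC, cesaro_single]
    split_ifs <;> simp
  have hcoord : ∀ (f : L2 V) (w : V), f w = inner ℂ (lp.single 2 w (1:ℂ) : L2 V) f := by
    intro f w
    rw [lp.inner_single_left]; simp
  have hCad : ∀ w : V, (ContinuousLinearMap.adjoint C (lp.single 2 u (1:ℂ))) w =
      ((if T.anc w u then ((T.dep u : ℝ) + 1)⁻¹ else 0 : ℝ) : ℂ) := by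
    intro w
    rw [hcoord, ContinuousLinearMap.adjoint_inner_right, lp.inner_single_right, hCE]
    simp [-Complex.ofReal_inv]
  have hP : ((ContinuousLinearMap.adjoint C * C) (lp.single 2 u (1:ℂ))) v =
      inner ℂ (C (lp.single 2 v (1:ℂ))) (C (lp.single 2 u (1:ℂ))) := by
    rw [hcoord, ContinuousLinearMap.mul_apply, ContinuousLinearMap.adjoint_inner_right]
  have hQ : ((C * ContinuousLinearMap.adjoint C) (lp.single 2 u (1:ℂ))) v =
      ((((T.dep u:ℝ) + 1)⁻¹ * ((T.dep v:ℝ) + 1)⁻¹ *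
       (((Finset.range (T.dep v + 1)).filter (fun j => T.anc (T.par^[j] v) u)).card : ℝ) : ℝ) : ℂ) := by
    rw [ContinuousLinearMap.mul_apply, hC, cesaro]
    simp only [hCad]
    rw [← Complex.ofReal_sum, ← Finset.sum_filter, Finset.sum_const, nsmul_eq_mul]
    push_cast
    ring
  have hS : HasSum (fun w => ((if T.anc v w ∧ T.anc u w then (((T.dep w : ℝ) + 1)⁻¹) ^ 2 else 0 : ℝ) : ℂ))
      (inner ℂ (C (lp.single 2 v (1:ℂ))) (C (lp.single 2 u (1:ℂ)))) := by
    have h0 := lp.hasSum_inner (𝕜 := ℂ) (C (lp.single 2 v (1:ℂ))) (C (lp.single 2 u (1:ℂ)))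
    refine Eq.mp (congrArg (fun F : V → ℂ => HasSum F _) ?_) h0
    funext w
    rw [hCE, hCE, RCLike.inner_apply, Complex.conj_ofReal, ← Complex.ofReal_mul]
    by_cases h1 : T.anc v w <;> by_cases h2 : T.anc u w <;> simp [h1, h2, sq]
  have hsub : ((ContinuousLinearMap.adjoint C * C - C * ContinuousLinearMap.adjoint C)
      (lp.single 2 u (1:ℂ))) v = ((ContinuousLinearMap.adjoint C * C) (lp.single 2 u (1:ℂ))) v
      - ((C * ContinuousLinearMap.adjoint C) (lp.single 2 u (1:ℂ))) v := rfl
  rw [hsub, hP, hQ]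
  have hru : 0 < ((T.dep u:ℝ) + 1)⁻¹ := by positivity
  have hrv : 0 < ((T.dep v:ℝ) + 1)⁻¹ := by positivity
  by_cases hvu : T.anc v u
  · -- comparable
    have hle := hvu.eq.1
    have hcard : (Finset.range (T.dep v + 1)).filter (fun j => T.anc (T.par^[j] v) u)
        = Finset.range (T.dep v + 1) := by
      apply Finset.filter_true_of_mem
      intro j _
      exact anc.trans ⟨j, rfl⟩ hvu
    rw [hcard, Finset.card_range]
    generalize inner ℂ (C (lp.single 2 v (1:ℂ))) (C (lp.single 2 u (1:ℂ))) = P at hS ⊢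
    have hinj : Function.Injective (fun n : ℕ => c^[n] u) := by
      intro a b hab
      have h1 := (ray hB c hc hu a).1
      have h2 := (ray hB c hc hu b).1
      simp only at hab
      rw [hab] at h1
      omega
    have hS2 := (hinj.hasSum_iff (f := fun w => ((if T.anc v w ∧ T.anc u w then (((T.dep w : ℝ) + 1)⁻¹) ^ 2 else 0 : ℝ) : ℂ)) (by
      intro x hx
      rw [if_neg]
      · simp
      · rintro ⟨-, j, hj⟩
        exact hx ⟨j, ((ray hB c hc hu j).2 x hj).symm⟩)).2 hS
    have hS3 : HasSum (fun n : ℕ => (((((T.dep u:ℝ) + n + 1)⁻¹) ^ 2 : ℝ) : ℂ)) P := by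
      convert hS2 using 2 with n
      have ha : T.anc u (c^[n] u) := ⟨n, par_child c hc u n⟩
      simp only [Function.comp]
      rw [if_pos ⟨hvu.trans ha, ha⟩, (ray hB c hc hu n).1]
      push_cast
      rfl
    have hS4 : HasSum (fun n : ℕ => (((T.dep u:ℝ) + n + 1)⁻¹) ^ 2) P.re := by
      have := hS3.mapL Complex.reCLM
      simpa only [Complex.reCLM_apply, Complex.ofReal_re] using this
    have hPe : P = (P.re : ℂ) := hS3.unique (Complex.hasSum_ofReal.2 hS4)
    have hb := tele_bound _ _ hS4
    rw [hPe, ← Complex.ofReal_sub, Complex.norm_real, Real.norm_eq_abs]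
    have e : ((T.dep u:ℝ) + 1)⁻¹ * ((T.dep v:ℝ) + 1)⁻¹ * ((T.dep v + 1 : ℕ) : ℝ) = ((T.dep u:ℝ) + 1)⁻¹ := by
      push_cast
      field_simp
    rw [e]
    have hmono : ((T.dep u:ℝ) + 1)⁻¹ ≤ ((T.dep v:ℝ) + 1)⁻¹ := by
      gcongr
    have hBn : (0:ℝ) ≤ B := by positivity
    have hm : 0 ≤ (B:ℝ) * (((T.dep u:ℝ) + 1)⁻¹ * ((T.dep v:ℝ) + 1)⁻¹) := by positivity
    nlinarith [mul_le_mul_of_nonneg_left hmono hru.le]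
  · have huv' : ¬ T.anc u v := fun h => hvu (huv h)
    have hz : inner ℂ (C (lp.single 2 v (1:ℂ))) (C (lp.single 2 u (1:ℂ))) = 0 := by
      refine hS.unique ?_
      convert hasSum_zero using 2 with w
      rw [if_neg]
      · simp
      · rintro ⟨h1, h2⟩
        rcases h1.comp h2 with h | h
        · exact hvu h
        · exact huv' h
    have hcard : ((Finset.range (T.dep v + 1)).filter (fun j => T.anc (T.par^[j] v) u)).card
        ≤ B + 1 := by
      have hsubs : (Finset.range (T.dep v + 1)).filter (fun j => T.anc (T.par^[j] v) u) ⊆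
          (Finset.Icc (T.dep v - B) (T.dep v)) := by
        intro j hj
        rw [Finset.mem_filter, Finset.mem_range] at hj
        rw [Finset.mem_Icc]
        refine ⟨?_, by omega⟩
        by_contra hlt
        have hdw : B < T.dep (T.par^[j] v) := by rw [T.dep_iter]; omega
        obtain ⟨-, i, hi⟩ := hj
        have e1 := (ray hB c hc hdw i).2 u hi
        have e2 := (ray hB c hc hdw j).2 v rfl
        rcases le_total i j with h | h
        · apply huv'
          have := anc_child c hc (T.par^[j] v) h
          rwa [← e1, ← e2] at this
        · apply hvu
          have := anc_child c hc (T.par^[j] v) h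
          rwa [← e1, ← e2] at this
      have := Finset.card_le_card hsubs
      rw [Nat.card_Icc] at this
      omega
    rw [hz, zero_sub, norm_neg, Complex.norm_real, Real.norm_eq_abs, abs_of_nonneg (by positivity),
      mul_comm]
    have : (((Finset.range (T.dep v + 1)).filter (fun j => T.anc (T.par^[j] v) u)).card : ℝ) ≤ (B:ℝ) + 1 := by
      exact_mod_cast hcard
    exact mul_le_mul_of_nonneg_right this (by positivity)

end TreeData

/-- The bounded Cesàro operator of a leafless, locally finite rooted directed
tree of finite branching index is essentially normal: its self-commutator is compact. -/
theorem cesaro_essentially_normal {V : Type} [Countable V] [Infinite V]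
    (T : TreeData V)
    (hleafless : ∀ u : V, (T.chi u).Nonempty)
    (hlocfin : ∀ u : V, (T.chi u).Finite)
    (hfbi : ∃ B : ℕ, ∀ v : V, T.branching v → T.dep v ≤ B)
    (C : L2 V →L[ℂ] L2 V) (hC : ∀ (f : L2 V) (v : V), C f v = T.cesaro ⇑f v) :
    IsCompactOperator
      ⇑(ContinuousLinearMap.adjoint C * C - C * ContinuousLinearMap.adjoint C) := by
  classical
  obtain ⟨B, hB⟩ := hfbi
  choose c hc using hleafless
  set D := ContinuousLinearMap.adjoint C * C - C * ContinuousLinearMap.adjoint C with hD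
  have hcoord : ∀ (f : L2 V) (w : V), f w = inner ℂ (lp.single 2 w (1:ℂ) : L2 V) f := by
    intro f w
    rw [lp.inner_single_left]; simp
  have hsym : ∀ u v : V, ‖(D (lp.single 2 u (1:ℂ))) v‖ = ‖(D (lp.single 2 v (1:ℂ))) u‖ := by
    intro u v
    have hadj : ContinuousLinearMap.adjoint D = D := by
      rw [hD, map_sub]
      simp only [ContinuousLinearMap.mul_def, ContinuousLinearMap.adjoint_comp,
        ContinuousLinearMap.adjoint_adjoint]
    rw [hcoord, hcoord (D (lp.single 2 v (1:ℂ))) u]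
    conv_lhs => rw [← hadj]
    rw [ContinuousLinearMap.adjoint_inner_right, norm_inner_symm]
  have hn1 : ∀ u : V, ‖(lp.single 2 u (1:ℂ) : L2 V)‖ = 1 := by
    intro u
    rw [lp.norm_single (by norm_num)]
    simp
  have hcrude : ∀ u v : V, ‖(D (lp.single 2 u (1:ℂ))) v‖ ≤ ‖D‖ := by
    intro u v
    refine (lp.norm_apply_le_norm (by norm_num) _ v).trans ?_
    have := D.le_opNorm (lp.single 2 u (1:ℂ))
    rwa [hn1, mul_one] at this
  obtain ⟨M, hM0, hM⟩ : ∃ M : ℝ, 0 ≤ M ∧ ∀ u v : V, ‖(D (lp.single 2 u (1:ℂ))) v‖ ≤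
      M * (((T.dep u:ℝ) + 1)⁻¹ * ((T.dep v:ℝ) + 1)⁻¹) := by
    have hDn := norm_nonneg D
    refine ⟨((B:ℝ) + 1) + ‖D‖ * ((B:ℝ) + 1) ^ 2, by positivity, fun u v => ?_⟩
    have hr : 0 ≤ ((T.dep u:ℝ) + 1)⁻¹ * ((T.dep v:ℝ) + 1)⁻¹ := by positivity
    have hA : ∀ u v : V, (T.anc u v → T.anc v u) → B < T.dep u →
        ‖(D (lp.single 2 u (1:ℂ))) v‖ ≤ (((B:ℝ) + 1) + ‖D‖ * ((B:ℝ) + 1) ^ 2) *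
          (((T.dep u:ℝ) + 1)⁻¹ * ((T.dep v:ℝ) + 1)⁻¹) := by
      intro u v h1 h2
      refine (TreeData.entry_bound hB c hc C hC u v h1 h2).trans ?_
      refine mul_le_mul_of_nonneg_right ?_ (by positivity)
      have : 0 ≤ ‖D‖ * ((B:ℝ) + 1) ^ 2 := by positivity
      linarith
    by_cases hsmall : T.dep u ≤ B ∧ T.dep v ≤ B
    · refine (hcrude u v).trans ?_
      have h1 : ((B:ℝ) + 1)⁻¹ ≤ ((T.dep u:ℝ) + 1)⁻¹ := by
        have : (T.dep u : ℝ) ≤ B := by exact_mod_cast hsmall.1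
        gcongr
      have h2 : ((B:ℝ) + 1)⁻¹ ≤ ((T.dep v:ℝ) + 1)⁻¹ := by
        have : (T.dep v : ℝ) ≤ B := by exact_mod_cast hsmall.2
        gcongr
      have h3 := mul_le_mul h1 h2 (by positivity) (by positivity)
      have h4 : ‖D‖ = ‖D‖ * ((B:ℝ) + 1) ^ 2 * (((B:ℝ) + 1)⁻¹ * ((B:ℝ) + 1)⁻¹) := by
        field_simp
      have h5 := mul_le_mul_of_nonneg_left h3 (show 0 ≤ ‖D‖ * ((B:ℝ) + 1) ^ 2 by positivity)
      have h6 : 0 ≤ ((B:ℝ) + 1) * (((T.dep u:ℝ) + 1)⁻¹ * ((T.dep v:ℝ) + 1)⁻¹) := by positivity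
      rw [add_mul]
      linarith
    · by_cases h1 : T.dep v ≤ T.dep u ∧ (T.anc u v → T.anc v u)
      · exact hA u v h1.2 (by omega)
      · have hA' := hA v u
        rw [hsym, mul_comm (((T.dep u:ℝ) + 1)⁻¹)]
        by_cases hvu : T.anc v u
        · have := hvu.eq.1
          exact absurd ⟨this, fun _ => hvu⟩ h1
        · refine hA v u (fun h => absurd h hvu) ?_
          by_cases huv : T.anc u v
          · have := huv.eq.1
            omega
          · have : ¬ (T.dep v ≤ T.dep u) := fun h => h1 ⟨h, fun h => absurd h huv⟩
            omega
  have hroot : ∀ v, ‖C (lp.single 2 T.root (1:ℂ)) v‖ = ((T.dep v:ℝ) + 1)⁻¹ := by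
    intro v
    rw [hC, TreeData.cesaro_single, if_pos ⟨_, T.dep_spec v⟩, norm_inv]
    congr 1
    rw [show ((T.dep v : ℂ) + 1) = (((T.dep v : ℝ) + 1 : ℝ) : ℂ) by push_cast; rfl,
      Complex.norm_real, Real.norm_eq_abs, abs_of_nonneg (by positivity)]
  have hsum : Summable fun v : V => (((T.dep v:ℝ) + 1)⁻¹) ^ 2 := by
    have := (lp.memℓp (C (lp.single 2 T.root (1:ℂ)))).summable (by norm_num)
    simpa [hroot] using this
  apply hs_compact
  refine Summable.of_nonneg_of_le (fun _ => by positivity) (fun u => ?_)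
    (hsum.mul_left ((M * ‖C (lp.single 2 T.root (1:ℂ))‖) ^ 2))
  rw [← mul_pow]
  refine pow_le_pow_left₀ (norm_nonneg _) ?_ 2
  have h1 : ‖D (lp.single 2 u (1:ℂ))‖ ≤
      ‖((M * ((T.dep u:ℝ) + 1)⁻¹ : ℝ) : ℂ) • C (lp.single 2 T.root (1:ℂ))‖ := by
    refine lp.norm_mono (by norm_num) fun v => ?_
    rw [lp.coeFn_smul, Pi.smul_apply, norm_smul, hroot, Complex.norm_real, Real.norm_eq_abs,
      abs_of_nonneg (by positivity), mul_assoc]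
    exact hM u v
  rw [norm_smul, Complex.norm_real, Real.norm_eq_abs, abs_of_nonneg (by positivity)] at h1
  refine h1.trans_eq ?_
  ring
end
end

section
/- Let k ≥ 5 be an integer and let T_k = (V, root, par) be a rooted directed tree in which card(Chi(root)) = k and every vertex other than root has exactly one child. Then the bounded Cesàro operator C_{T_k} on ℓ²(V) satisfies ‖C_{T_k}‖ > 2, while its spectral radius equals 2; in particular C_{T_k} is not normaloid (its norm strictly exceeds its spectral radius). -/
noncomputable section

open scoped ENNReal

lemma aux_hardy (a : ℕ → ℝ) (N : ℕ) :
    ∑ n ∈ Finset.range N, ((n + 1 : ℝ)⁻¹ * ∑ j ∈ Finset.range (n + 1), a j) ^ 2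
      ≤ 4 * ∑ n ∈ Finset.range N, a n ^ 2 := by
  have key : ∀ N : ℕ, ∑ n ∈ Finset.range N, ((n + 1 : ℝ)⁻¹ * ∑ j ∈ Finset.range (n + 1), a j) ^ 2
      ≤ 4 * ∑ n ∈ Finset.range N, a n ^ 2
        - 2 * (N : ℝ)⁻¹ * (∑ j ∈ Finset.range N, a j) ^ 2 := by
    intro N
    induction N with
    | zero => simp
    | succ N ih =>
      rw [Finset.sum_range_succ, Finset.sum_range_succ (fun n => a n ^ 2)]
      have hS := Finset.sum_range_succ a N
      set S := ∑ j ∈ Finset.range N, a j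
      set S' := ∑ j ∈ Finset.range (N + 1), a j
      have hN : (0 : ℝ) < N + 1 := by positivity
      obtain ⟨α, hα⟩ : ∃ α, S' = (N + 1) * α := ⟨S' / (N + 1), by field_simp⟩
      have e1 : ((N : ℝ) + 1)⁻¹ * S' = α := by rw [hα]; field_simp
      have e2 : 2 * ((N + 1 : ℕ) : ℝ)⁻¹ * S' ^ 2 = 2 * (N + 1) * α ^ 2 := by
        rw [hα]; push_cast; field_simp
      rw [e1, e2]
      obtain ⟨β, hβ, e3⟩ : ∃ β, S = N * β ∧ 2 * (N : ℝ)⁻¹ * S ^ 2 = 2 * N * β ^ 2 := by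
        rcases Nat.eq_zero_or_pos N with h | h
        · subst h
          refine ⟨0, ?_, ?_⟩ <;> simp [S]
        · have : (0 : ℝ) < N := by exact_mod_cast h
          refine ⟨S / N, by field_simp, by field_simp⟩
      rw [e3] at ih
      have ha : a N = (N + 1) * α - N * β := by linarith
      have hN0 : (0 : ℝ) ≤ N := by positivity
      rw [ha]
      nlinarith [mul_nonneg hN0 (sq_nonneg (α - β)), sq_nonneg (α - 2 * ((N + 1) * α - N * β))]
  refine (key N).trans ?_
  have : 0 ≤ 2 * (N : ℝ)⁻¹ * (∑ j ∈ Finset.range N, a j) ^ 2 := by positivity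
  linarith

lemma aux_branch {V : Type} (T : TreeData V)
    (hother : ∀ v : V, v ≠ T.root → (T.chi v).encard = 1) :
    ∃ e : T.chi T.root → ℕ → V, (∀ c n, e c n ≠ T.root) ∧
      (Function.Injective fun x : T.chi T.root × ℕ => e x.1 x.2) ∧
      (∀ v, v ≠ T.root → ∃ c n, e c n = v) ∧
      ∀ c n (f : V → ℂ), T.cesaro f (e c n) =
        ((n : ℂ) + 2)⁻¹ * (f T.root + ∑ j ∈ Finset.range (n + 1), f (e c j)) := by
  classical
  have h1 : ∀ v : V, ∃ w, v ≠ T.root → T.chi v = {w} := by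
    intro v
    by_cases h : v = T.root
    · exact ⟨v, fun h' => absurd h h'⟩
    · obtain ⟨w, hw⟩ := Set.encard_eq_one.1 (hother v h)
      exact ⟨w, fun _ => hw⟩
  choose ch hch using h1
  have hmem : ∀ v, v ≠ T.root → ch v ≠ T.root ∧ T.par (ch v) = v := by
    intro v hv
    have : ch v ∈ T.chi v := by rw [hch v hv]; rfl
    exact this
  let e : T.chi T.root → ℕ → V := fun c n => ch^[n] c.1
  have e0 : ∀ c, e c 0 = c.1 := fun c => rfl
  have es : ∀ c n, e c (n + 1) = ch (e c n) := fun c n => Function.iterate_succ_apply' _ _ _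
  have hne : ∀ c n, e c n ≠ T.root := by
    intro c n
    induction n with
    | zero => exact c.2.1
    | succ n ih => rw [es]; exact (hmem _ ih).1
  have hpar0 : ∀ c, T.par (e c 0) = T.root := fun c => c.2.2
  have hpars : ∀ c n, T.par (e c (n + 1)) = e c n := by
    intro c n; rw [es]; exact (hmem _ (hne c n)).2
  have hit : ∀ c j m, T.par^[j] (e c (m + j)) = e c m := by
    intro c j
    induction j with
    | zero => intro m; rfl
    | succ j ih => intro m; rw [Function.iterate_succ_apply, ← add_assoc, hpars]; exact ih m
  have hlast : ∀ c n, T.par^[n + 1] (e c n) = T.root := by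
    intro c n
    rw [Function.iterate_succ_apply']
    have := hit c n 0
    rw [zero_add] at this
    rw [this, hpar0]
  have hdep : ∀ c n, T.dep (e c n) = n + 1 := by
    intro c n
    unfold TreeData.dep
    rw [Nat.find_eq_iff]
    refine ⟨hlast c n, fun j hj h => ?_⟩
    have := hit c j (n - j)
    rw [Nat.sub_add_cancel (by omega)] at this
    exact hne _ _ (this.symm.trans h)
  refine ⟨e, hne, ?_, ?_, ?_⟩
  · rintro ⟨c, n⟩ ⟨c', n'⟩ h
    have h : e c n = e c' n' := h
    have hn : n = n' := by
      have := congrArg T.dep h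
      rw [hdep, hdep] at this; omega
    subst hn
    have h2 := hit c n 0
    have h3 := hit c' n 0
    rw [zero_add] at h2 h3
    have : e c 0 = e c' 0 := by rw [← h2, ← h3, h]
    rw [e0, e0] at this
    rw [Subtype.ext this]
  · have : ∀ n v, v ≠ T.root → T.par^[n] v = T.root → ∃ c n, e c n = v := by
      intro n
      induction n with
      | zero => intro v hv h; exact absurd h hv
      | succ n ih =>
        intro v hv h
        by_cases hp : T.par v = T.root
        · exact ⟨⟨v, hv, hp⟩, 0, rfl⟩
        · obtain ⟨c, m, hm⟩ := ih _ hp (by rwa [Function.iterate_succ_apply] at h)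
          refine ⟨c, m + 1, ?_⟩
          have : v ∈ T.chi (T.par v) := ⟨hv, rfl⟩
          rw [hch _ hp] at this
          rw [es, hm]; exact this.symm
    intro v hv
    obtain ⟨n, hn⟩ := T.hroot v
    exact this n v hv hn
  · intro c n f
    unfold TreeData.cesaro
    rw [hdep, Finset.sum_range_succ, hlast]
    have : ∑ j ∈ Finset.range (n + 1), f (T.par^[j] (e c n)) =
        ∑ j ∈ Finset.range (n + 1), f (e c j) := by
      rw [← Finset.sum_range_reflect (fun j => f (e c j))]
      refine Finset.sum_congr rfl fun j hj => ?_
      rw [Finset.mem_range] at hj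
      have := hit c j (n - j)
      rw [Nat.sub_add_cancel (by omega)] at this
      rw [this]
      congr 2
    rw [this]
    push_cast
    rw [add_comm (f T.root)]
    congr 2
    ring

lemma aux_root {V : Type} (T : TreeData V) (f : V → ℂ) : T.cesaro f T.root = f T.root := by
  have : T.dep T.root = 0 := by
    classical
    unfold TreeData.dep
    rw [Nat.find_eq_zero]; rfl
  simp [TreeData.cesaro, this]

def auxg (a : ℝ) : ℕ → ℝ
  | 0 => 1
  | n + 1 => auxg a n * (1 - a / (n + 1))

lemma auxg_bound (a : ℝ) (ha : 0 < a) (ha1 : a < 1) (n : ℕ) :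
    0 ≤ auxg a n ∧ auxg a n ≤ ((n : ℝ) + 1) ^ (-a) := by
  induction n with
  | zero => simp [auxg]
  | succ n ih =>
    have hn : (0 : ℝ) < n + 1 := by positivity
    have h0 : 0 ≤ 1 - a / (n + 1) := by
      rw [sub_nonneg, div_le_one hn]
      have : (0 : ℝ) ≤ n := by positivity
      linarith
    refine ⟨mul_nonneg ih.1 h0, ?_⟩
    have h1 : 1 - a / (n + 1) ≤ (((n : ℝ) + 1 + 1) / (n + 1)) ^ (-a) := by
      have h2 : ((n : ℝ) + 1 + 1) / (n + 1) ≤ Real.exp (1 / (n + 1)) := by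
        have := Real.add_one_le_exp (1 / ((n : ℝ) + 1))
        refine le_trans (le_of_eq ?_) this
        field_simp
        ring
      have h3 : (Real.exp (1 / ((n : ℝ) + 1))) ^ (-a) ≤ (((n : ℝ) + 1 + 1) / (n + 1)) ^ (-a) :=
        Real.rpow_le_rpow_of_nonpos (by positivity) h2 (by linarith)
      refine le_trans ?_ h3
      rw [← Real.exp_mul]
      have := Real.add_one_le_exp (1 / ((n : ℝ) + 1) * (-a))
      refine le_trans (le_of_eq ?_) this
      ring
    have h4 : (((n + 1 : ℕ) : ℝ) + 1) ^ (-a)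
        = ((n : ℝ) + 1) ^ (-a) * (((n : ℝ) + 1 + 1) / (n + 1)) ^ (-a) := by
      rw [← Real.mul_rpow (by positivity) (by positivity)]
      congr 1
      push_cast
      field_simp
    rw [h4]
    exact mul_le_mul ih.2 h1 h0 (by positivity)

lemma auxg_sq (a : ℝ) (ha : 1 / 2 < a) (ha1 : a < 1) : Summable fun n => auxg a n ^ 2 := by
  have h1 : Summable fun n : ℕ => ((n : ℝ)) ^ (-(2 * a)) := by
    rw [Real.summable_nat_rpow]; linarith
  have h2 := (summable_nat_add_iff 1).2 h1
  refine Summable.of_nonneg_of_le (fun n => sq_nonneg _) (fun n => ?_) h2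
  obtain ⟨h3, h4⟩ := auxg_bound a (by linarith) ha1 n
  calc auxg a n ^ 2 ≤ (((n : ℝ) + 1) ^ (-a)) ^ 2 := by gcongr
    _ = _ := by
      rw [← Real.rpow_natCast, ← Real.rpow_mul (by positivity)]
      push_cast
      congr 1
      ring

lemma auxg_tendsto (a : ℝ) (ha : 1 / 2 < a) (ha1 : a < 1) :
    Filter.Tendsto (auxg a) Filter.atTop (nhds 0) := by
  have := (auxg_sq a ha ha1).tendsto_atTop_zero
  have h := this.sqrt
  simp only [Real.sqrt_zero] at h
  refine h.congr fun n => ?_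
  exact Real.sqrt_sq (auxg_bound a (by linarith) ha1 n).1

lemma auxg_hasSum (a : ℝ) (ha : 1 / 2 < a) (ha1 : a < 1) (j : ℕ) :
    HasSum (fun n : ℕ => if j ≤ n then ((n : ℝ) + 1)⁻¹ * auxg a n else 0) (a⁻¹ * auxg a j) := by
  have hp : ∀ N : ℕ, ∑ n ∈ Finset.range N, (if j ≤ n then ((n : ℝ) + 1)⁻¹ * auxg a n else 0)
      = if j ≤ N then a⁻¹ * (auxg a j - auxg a N) else 0 := by
    intro N
    induction N with
    | zero =>
      by_cases h : j ≤ 0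
      · have : j = 0 := by omega
        simp [this]
      · simp [h]
    | succ N ih =>
      rw [Finset.sum_range_succ, ih]
      by_cases h : j ≤ N
      · rw [if_pos h, if_pos h, if_pos (by omega)]
        have : (0 : ℝ) < N + 1 := by positivity
        have : 0 < a := by linarith
        simp only [auxg]
        field_simp
        ring
      · rw [if_neg h, if_neg h]
        by_cases h' : j ≤ N + 1
        · have : j = N + 1 := by omega
          simp [this]
        · simp [h']
  rw [hasSum_iff_tendsto_nat_of_nonneg]
  · have : Filter.Tendsto (fun N => a⁻¹ * (auxg a j - auxg a N)) Filter.atTop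
        (nhds (a⁻¹ * (auxg a j - 0))) :=
      ((tendsto_const_nhds).sub (auxg_tendsto a ha ha1)).const_mul _
    rw [sub_zero] at this
    refine this.congr' ?_
    filter_upwards [Filter.eventually_ge_atTop j] with N hN
    rw [hp, if_pos hN]
  · intro n
    have := (auxg_bound a (by linarith) ha1 n).1
    split_ifs <;> positivity

lemma aux_sum_le {V : Type} (f : L2 V) (s : Finset V) : ∑ v ∈ s, ‖f v‖ ^ 2 ≤ ‖f‖ ^ 2 := by
  have := lp.sum_rpow_le_norm_rpow (p := 2) (by simp) f s
  simpa using this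

lemma aux_norm_le {V : Type} (f : L2 V) (K : ℝ) (hK : 0 ≤ K)
    (h : ∀ s : Finset V, ∑ v ∈ s, ‖f v‖ ^ 2 ≤ K ^ 2) : ‖f‖ ≤ K := by
  refine lp.norm_le_of_forall_sum_le (p := 2) (by simp) hK fun s => ?_
  simpa using h s

lemma aux_contr {V : Type} (T : TreeData V) (hfin : (T.chi T.root).Finite)
    (hother : ∀ v : V, v ≠ T.root → (T.chi v).encard = 1)
    (C : L2 V →L[ℂ] L2 V) (hC : ∀ (f : L2 V) (v : V), C f v = T.cesaro ⇑f v)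
    (g : L2 V) (hg : g T.root = 0) : ‖C g‖ ≤ 2 * ‖g‖ := by
  classical
  obtain ⟨e, hne, hinj, hsurj, hces⟩ := aux_branch T hother
  haveI : Fintype (T.chi T.root) := hfin.fintype
  refine aux_norm_le _ _ (by positivity) fun s => ?_
  obtain ⟨N, hN⟩ : ∃ N, ∀ v ∈ s, v ≠ T.root → ∃ c n, n < N ∧ e c n = v := by
    choose! c n hcn using hsurj
    refine ⟨s.sup n + 1, fun v hv hvr => ⟨c v hvr, n v, ?_, hcn v hvr⟩⟩
    exact Nat.lt_succ_of_le (Finset.le_sup hv)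
  let P : Finset (T.chi T.root × ℕ) := Finset.univ ×ˢ Finset.range N
  let E : Finset V := P.image fun x => e x.1 x.2
  have hsumE : ∀ F : V → ℝ, ∑ v ∈ E, F v = ∑ c, ∑ n ∈ Finset.range N, F (e c n) := by
    intro F
    rw [Finset.sum_image hinj.injOn, Finset.sum_product]
  have h1 : ∑ v ∈ s, ‖C g v‖ ^ 2 ≤ ∑ v ∈ E, ‖C g v‖ ^ 2 := by
    have : ∑ v ∈ s, ‖C g v‖ ^ 2 = ∑ v ∈ s.erase T.root, ‖C g v‖ ^ 2 := by
      rw [Finset.sum_erase]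
      rw [hC, aux_root, hg]; simp
    rw [this]
    refine Finset.sum_le_sum_of_subset_of_nonneg ?_ fun _ _ _ => by positivity
    intro v hv
    rw [Finset.mem_erase] at hv
    obtain ⟨c, n, hn, h⟩ := hN v hv.2 hv.1
    exact Finset.mem_image.2 ⟨(c, n), by simp [P, hn], h⟩
  refine h1.trans ?_
  have h2 : ∑ v ∈ E, ‖C g v‖ ^ 2 ≤ 4 * ∑ v ∈ E, ‖g v‖ ^ 2 := by
    rw [hsumE, hsumE, Finset.mul_sum]
    refine Finset.sum_le_sum fun c _ => ?_
    refine le_trans (Finset.sum_le_sum fun n _ => ?_) (aux_hardy (fun n => ‖g (e c n)‖) N)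
    rw [hC, hces, hg, zero_add, norm_mul]
    gcongr
    · have : ((n : ℂ) + 2) = (((n : ℝ) + 2 : ℝ) : ℂ) := by push_cast; rfl
      rw [this, norm_inv, Complex.norm_real, Real.norm_of_nonneg (by positivity)]
      gcongr
      norm_num
    · exact norm_sum_le _ _
  have h3 := aux_sum_le g E
  calc _ ≤ _ := h2
    _ ≤ 4 * ‖g‖ ^ 2 := by gcongr
    _ = _ := by ring

lemma aux_upper {V : Type} (T : TreeData V) (hfin : (T.chi T.root).Finite)
    (hother : ∀ v : V, v ≠ T.root → (T.chi v).encard = 1)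
    (C : L2 V →L[ℂ] L2 V) (hC : ∀ (f : L2 V) (v : V), C f v = T.cesaro ⇑f v)
    (z : ℂ) (hz : z ∈ spectrum ℂ C) : ‖z‖ ≤ 2 := by
  classical
  haveI : Nontrivial (L2 V) := by
    refine ⟨lp.single 2 T.root 1, 0, fun h => ?_⟩
    have := congrArg norm h
    rw [lp.norm_single (by norm_num)] at this
    simp at this
  have hpow : ∀ (n : ℕ) (g : L2 V), g T.root = 0 →
      (C ^ n) g T.root = 0 ∧ ‖(C ^ n) g‖ ≤ 2 ^ n * ‖g‖ := by
    intro n g hg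
    induction n with
    | zero => simp [hg]
    | succ n ih =>
      rw [pow_succ']
      change (C ((C ^ n) g)) T.root = 0 ∧ ‖C ((C ^ n) g)‖ ≤ _
      refine ⟨by rw [hC, aux_root, ih.1], ?_⟩
      refine (aux_contr T hfin hother C hC _ ih.1).trans ?_
      rw [pow_succ']
      nlinarith [ih.2]
  have hn : ∀ n : ℕ, ‖C ^ n * (C - 1)‖ ≤ 2 ^ n * ‖C - 1‖ := by
    intro n
    refine ContinuousLinearMap.opNorm_le_bound _ (by positivity) fun f => ?_
    change ‖(C ^ n) ((C - 1) f)‖ ≤ _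
    have h0 : ((C - 1) f) T.root = 0 := by
      change (C f - f) T.root = 0
      rw [lp.coeFn_sub, Pi.sub_apply, hC, aux_root, sub_self]
    refine (hpow n _ h0).2.trans ?_
    rw [mul_assoc]
    gcongr
    exact ContinuousLinearMap.le_opNorm _ _
  have hs : ∀ n : ℕ, ‖z‖ ^ n * ‖z - 1‖ ≤ 2 ^ n * ‖C - 1‖ := by
    intro n
    have h1 := spectrum.subset_polynomial_aeval C
      (Polynomial.X ^ n * (Polynomial.X - 1) : Polynomial ℂ) ⟨z, hz, rfl⟩
    simp only [Polynomial.eval_mul, Polynomial.eval_pow, Polynomial.eval_X, Polynomial.eval_sub,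
      Polynomial.eval_one, map_mul, map_pow, Polynomial.aeval_X, map_sub, map_one] at h1
    have h2 := spectrum.norm_le_norm_of_mem h1
    rw [norm_mul, norm_pow] at h2
    exact h2.trans (hn n)
  by_contra! hlt
  have hz1 : 0 < ‖z - 1‖ := by
    rw [norm_pos_iff, sub_ne_zero]
    rintro rfl
    norm_num at hlt
  have h1 : 1 < ‖z‖ / 2 := by linarith
  obtain ⟨n, hn'⟩ := pow_unbounded_of_one_lt (‖C - 1‖ / ‖z - 1‖) h1
  rw [div_lt_iff₀ hz1, div_pow, div_mul_eq_mul_div, lt_div_iff₀ (by positivity)] at hn'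
  have := hs n
  linarith

lemma aux_lower {V : Type} (T : TreeData V) (c : T.chi T.root)
    (hother : ∀ v : V, v ≠ T.root → (T.chi v).encard = 1)
    (C : L2 V →L[ℂ] L2 V) (hC : ∀ (f : L2 V) (v : V), C f v = T.cesaro ⇑f v)
    (a : ℝ) (ha : 1 / 2 < a) (ha1 : a < 1) : ((a⁻¹ : ℝ) : ℂ) ∈ spectrum ℂ C := by
  classical
  obtain ⟨e, hne, hinj, hsurj, hces⟩ := aux_branch T hother
  let p : ℕ → V := fun n => Nat.casesOn n T.root (fun m => e c m)
  have p0 : p 0 = T.root := rfl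
  have ps : ∀ n, p (n + 1) = e c n := fun n => rfl
  have pinj : Function.Injective p := by
    intro m n h
    cases m with
    | zero =>
      cases n with
      | zero => rfl
      | succ n => exact absurd h.symm (hne _ _)
    | succ m =>
      cases n with
      | zero => exact absurd h (hne _ _)
      | succ n =>
        have := @hinj (c, m) (c, n) h
        simp only [Prod.mk.injEq, true_and] at this
        rw [this]
  have pces : ∀ n (f : V → ℂ), T.cesaro f (p n) =
      ((n : ℂ) + 1)⁻¹ * ∑ j ∈ Finset.range (n + 1), f (p j) := by
    intro n f
    cases n with
    | zero => rw [p0, aux_root]; simp [p0]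
    | succ n =>
      rw [ps, hces, Finset.sum_range_succ' (fun j => f (p j)), p0]
      change _ = _ * (∑ j ∈ Finset.range (n + 1), f (e c j) + _)
      push_cast
      rw [add_comm (f T.root)]
      congr 2
      ring
  let G0 : V → ℂ := Function.extend p (fun n => (auxg a n : ℂ)) 0
  have G0p : ∀ n, G0 (p n) = auxg a n := fun n => pinj.extend_apply _ _ _
  have G0n : ∀ v, v ∉ Set.range p → G0 v = 0 := fun v hv =>
    Function.extend_apply' _ _ _ hv
  have hmem : Memℓp G0 2 := by
    rw [memℓp_gen_iff (by simp)]
    rw [← pinj.summable_iff]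
    · refine (auxg_sq a ha ha1).congr fun n => ?_
      simp [G0p]
    · intro v hv
      simp [G0n v hv]
  let G : L2 V := ⟨G0, hmem⟩
  have hG : ∀ v, G v = G0 v := fun v => rfl
  have hadj : (ContinuousLinearMap.adjoint C) G = ((a⁻¹ : ℝ) : ℂ) • G := by
    ext v
    have h1 : (ContinuousLinearMap.adjoint C) G v
        = inner ℂ (C (lp.single 2 v 1)) G := by
      rw [← ContinuousLinearMap.adjoint_inner_right, lp.inner_single_left]
      simp
    rw [h1, lp.inner_eq_tsum, ← pinj.tsum_eq]
    · rw [lp.coeFn_smul, Pi.smul_apply, hG]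
      by_cases hv : v ∈ Set.range p
      · obtain ⟨j, rfl⟩ := hv
        rw [G0p]
        have h2 := (Complex.hasSum_ofReal.2 (auxg_hasSum a ha ha1 j)).tsum_eq
        rw [smul_eq_mul, ← Complex.ofReal_mul, ← h2]
        refine tsum_congr fun n => ?_
        rw [hC, pces, hG, G0p]
        have h3 : ∑ i ∈ Finset.range (n + 1), (lp.single 2 (p j) (1 : ℂ) : L2 V) (p i)
            = if j ≤ n then 1 else 0 := by
          have : ∀ i, (lp.single 2 (p j) (1 : ℂ) : L2 V) (p i) = if j = i then 1 else 0 := by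
            intro i
            rw [lp.single_apply, Pi.single_apply]
            simp [pinj.eq_iff, eq_comm]
          simp only [this, Finset.sum_ite_eq, Finset.mem_range, Nat.lt_succ_iff]
        rw [h3]
        split_ifs
        · simp [mul_comm]
        · simp
      · rw [G0n v hv, smul_zero]
        have : ∀ n, inner ℂ (C (lp.single 2 v 1) (p n)) (G (p n)) = 0 := by
          intro n
          rw [hC, pces, Finset.sum_eq_zero]
          · simp
          · intro i _
            rw [lp.single_apply, Pi.single_apply, if_neg]
            rintro h
            exact hv ⟨i, h⟩
        exact (tsum_congr this).trans tsum_zero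
    · intro v hv
      by_contra h
      apply hv
      simp [hG, G0n v h]
  rw [spectrum.mem_iff]
  intro hu
  obtain ⟨f, hf⟩ : ∃ f, (algebraMap ℂ (L2 V →L[ℂ] L2 V) ((a⁻¹ : ℝ) : ℂ) - C) f = G := by
    obtain ⟨u, hu⟩ := hu
    refine ⟨(↑u⁻¹ : L2 V →L[ℂ] L2 V) G, ?_⟩
    rw [← hu, ← ContinuousLinearMap.mul_apply, u.mul_inv]
    rfl
  have hf' : ((a⁻¹ : ℝ) : ℂ) • f - C f = G := by
    rw [← hf, ContinuousLinearMap.sub_apply, Algebra.algebraMap_eq_smul_one]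
    rfl
  have h0 : inner ℂ G G = 0 := by
    nth_rewrite 2 [← hf']
    rw [inner_sub_right, inner_smul_right, ← ContinuousLinearMap.adjoint_inner_left, hadj,
      inner_smul_left, Complex.conj_ofReal, sub_self]
  rw [inner_self_eq_zero] at h0
  have h1 : G (p 0) = 0 := by rw [h0]; rfl
  rw [hG, G0p] at h1
  simp [auxg] at h1

lemma aux_norm {V : Type} (T : TreeData V) (k : ℕ) (hk : 5 ≤ k)
    (hroot : (T.chi T.root).encard = k)
    (hother : ∀ v : V, v ≠ T.root → (T.chi v).encard = 1)
    (C : L2 V →L[ℂ] L2 V) (hC : ∀ (f : L2 V) (v : V), C f v = T.cesaro ⇑f v) :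
    2 < ‖C‖ := by
  classical
  obtain ⟨e, hne, hinj, hsurj, hces⟩ := aux_branch T hother
  haveI : Fintype (T.chi T.root) := (Set.finite_of_encard_eq_coe hroot).fintype
  have hcard : Fintype.card (T.chi T.root) = k := by
    rw [← Set.coe_fintypeCard] at hroot
    exact_mod_cast hroot
  let f : L2 V := lp.single 2 T.root 1
  have hfr : f T.root = 1 := by simp [f, lp.single_apply]
  have hfe : ∀ c n, f (e c n) = 0 := by
    intro c n
    simp only [f, lp.single_apply]
    rw [Pi.single_apply, if_neg (hne c n)]
  have hf1 : ‖f‖ = 1 := by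
    simp only [f]
    rw [lp.norm_single (by norm_num)]; simp
  let P : Finset (T.chi T.root × ℕ) := Finset.univ ×ˢ Finset.range 30
  let E : Finset V := P.image fun x => e x.1 x.2
  have hE : T.root ∉ E := by
    intro h
    obtain ⟨x, _, hx⟩ := Finset.mem_image.1 h
    exact hne _ _ hx
  have h1 := aux_sum_le (C f) (insert T.root E)
  rw [Finset.sum_insert hE, Finset.sum_image hinj.injOn, Finset.sum_product] at h1
  have h2 : ∀ c n, ‖C f (e c n)‖ ^ 2 = (((n : ℝ) + 2) ^ 2)⁻¹ := by
    intro c n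
    rw [hC, hces, hfr, Finset.sum_eq_zero fun j _ => hfe c j]
    have : ((n : ℂ) + 2) = (((n : ℝ) + 2 : ℝ) : ℂ) := by push_cast; rfl
    rw [this, add_zero, mul_one, norm_inv, Complex.norm_real, Real.norm_of_nonneg (by positivity),
      inv_pow]
  simp only [h2] at h1
  rw [hC, aux_root, hfr, Finset.sum_const, Finset.card_univ, hcard, nsmul_eq_mul] at h1
  have h3 : (3 / 5 : ℝ) < ∑ n ∈ Finset.range 30, (((n : ℝ) + 2) ^ 2)⁻¹ := by
    norm_num [Finset.sum_range_succ]
  have hk' : (5 : ℝ) ≤ k := by exact_mod_cast hk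
  have h4 : 4 < ‖C f‖ ^ 2 := by
    simp only [norm_one, one_pow] at h1
    nlinarith
  have h5 : ‖C f‖ ≤ ‖C‖ := by
    have := C.le_opNorm f
    rwa [hf1, mul_one] at this
  have : 2 < ‖C f‖ := by
    by_contra! h
    nlinarith [norm_nonneg (C f)]
  linarith

/-- For `k ≥ 5`, the bounded Cesàro operator of the tree `T_k` (root with `k`
children, all other vertices with a single child) has norm strictly greater than `2` while its
spectral radius equals `2`; in particular it is not normaloid. -/
theorem cesaro_not_normaloid {V : Type} [Countable V] [Infinite V]
    (T : TreeData V) (k : ℕ) (hk : 5 ≤ k)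
    (hroot : (T.chi T.root).encard = k)
    (hother : ∀ v : V, v ≠ T.root → (T.chi v).encard = 1)
    (C : L2 V →L[ℂ] L2 V) (hC : ∀ (f : L2 V) (v : V), C f v = T.cesaro ⇑f v) :
    2 < ‖C‖ ∧ spectralRadius ℂ C = 2 := by
  have hfin := Set.finite_of_encard_eq_coe hroot
  refine ⟨aux_norm T k hk hroot hother C hC, le_antisymm ?_ ?_⟩
  · refine iSup₂_le fun z hz => ?_
    have := aux_upper T hfin hother C hC z hz
    exact_mod_cast (show ‖z‖₊ ≤ 2 from this)
  · obtain ⟨c, hc⟩ : (T.chi T.root).Nonempty := by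
      rw [← Set.encard_ne_zero, hroot]
      have : k ≠ 0 := by omega
      exact_mod_cast this
    refine le_of_forall_lt fun x hx => ?_
    lift x to NNReal using hx.ne_top
    have hx : (x : ℝ) < 2 := by exact_mod_cast hx
    obtain ⟨y, hy1, hy2⟩ := exists_between (max_lt hx (show (1 : ℝ) < 2 by norm_num))
    have hy0 : 1 < y := lt_of_le_of_lt (le_max_right _ _) hy1
    have hxy : (x : ℝ) < y := lt_of_le_of_lt (le_max_left _ _) hy1
    have := aux_lower T ⟨c, hc⟩ hother C hC y⁻¹
      (by rw [one_div]; exact inv_strictAnti₀ (by linarith) hy2) (inv_lt_one_of_one_lt₀ hy0)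
    rw [inv_inv] at this
    refine lt_of_lt_of_le ?_ (le_iSup₂ (f := fun (k : ℂ) (_ : k ∈ spectrum ℂ C) => (‖k‖₊ : ℝ≥0∞))
      _ this)
    rw [ENNReal.coe_lt_coe, ← NNReal.coe_lt_coe, coe_nnnorm, Complex.norm_real,
      Real.norm_of_nonneg (by linarith)]
    exact hxy
end
end

section
/- Let T = (V, root, par) be a rooted directed tree and w ∈ V. Then Λ_T e_w belongs to ℓ²(V) if and only if Σ_{j=0}^{∞} card(Chi^⟨j⟩(w)) / (dep(w)+j+1)² < ∞, and in that case ‖Λ_T e_w‖² equals this sum, where Chi^⟨j⟩(w) = {v ∈ V : dep(v) = dep(w) + j and par^j(v) = w}. -/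
noncomputable section

open scoped ENNReal

/-- The `j`-fold iterated children set `Chi^⟨j⟩(w)`. -/
def TreeData.chiIter {V : Type} (T : TreeData V) (w : V) (j : ℕ) : Set V :=
  {v : V | T.dep v = T.dep w + j ∧ T.par^[j] v = w}

theorem TreeData.par_iter_root {V : Type} (T : TreeData V) (n : ℕ) :
    T.par^[n] T.root = T.root := Function.iterate_fixed T.par_root n

theorem TreeData.par_iter_dep {V : Type} (T : TreeData V) (v : V) :
    T.par^[T.dep v] v = T.root := by
  classical
  unfold TreeData.dep
  convert Nat.find_spec (T.hroot v)

theorem TreeData.dep_le_s15 {V : Type} (T : TreeData V) (v : V) (n : ℕ)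
    (h : T.par^[n] v = T.root) : T.dep v ≤ n := by
  classical
  unfold TreeData.dep
  exact Nat.find_min' (T.hroot v) h

theorem TreeData.dep_par_iter {V : Type} (T : TreeData V) (v : V) (j : ℕ) (hj : j ≤ T.dep v) :
    T.dep (T.par^[j] v) + j = T.dep v := by
  apply le_antisymm
  · have : T.dep (T.par^[j] v) ≤ T.dep v - j := by
      apply T.dep_le_s15
      rw [← Function.iterate_add_apply, Nat.sub_add_cancel hj]
      exact T.par_iter_dep v
    omega
  · apply T.dep_le_s15
    rw [Function.iterate_add_apply]
    exact T.par_iter_dep _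

theorem TreeData.cesaro_single_of_mem {V : Type} [DecidableEq V] (T : TreeData V) (w v : V) (j : ℕ)
    (h : v ∈ T.chiIter w j) :
    ‖T.cesaro ⇑(lp.single 2 w (1 : ℂ) : L2 V) v‖ ^ 2 = (((T.dep w : ℝ) + j + 1) ^ 2)⁻¹ := by
  obtain ⟨h1, h2⟩ := h
  have : ∑ i ∈ Finset.range (T.dep v + 1), (lp.single 2 w (1 : ℂ) : L2 V) (T.par^[i] v) = 1 := by
    rw [Finset.sum_eq_single j]
    · rw [h2]; simp
    · intro i hi hij
      have := T.dep_par_iter v i (by simpa [Nat.lt_succ_iff] using hi)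
      have hne : T.par^[i] v ≠ w := by
        intro e
        rw [e] at this
        omega
      simp [lp.coeFn_single, hne]
    · intro hj
      exact absurd (Finset.mem_range.2 (by omega)) hj
  unfold TreeData.cesaro
  rw [this, mul_one, h1, norm_inv, inv_pow]
  congr 2
  rw [← Nat.cast_succ, Complex.norm_natCast]
  push_cast
  ring

theorem TreeData.cesaro_single_of_notMem {V : Type} [DecidableEq V] (T : TreeData V) (w v : V)
    (h : ∀ j, v ∉ T.chiIter w j) :
    ‖T.cesaro ⇑(lp.single 2 w (1 : ℂ) : L2 V) v‖ ^ 2 = 0 := by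
  have : ∑ i ∈ Finset.range (T.dep v + 1), (lp.single 2 w (1 : ℂ) : L2 V) (T.par^[i] v) = 0 := by
    apply Finset.sum_eq_zero
    intro i hi
    have := T.dep_par_iter v i (by simpa [Nat.lt_succ_iff] using hi)
    have hne : T.par^[i] v ≠ w := by
      intro e
      rw [e] at this
      exact h i ⟨this.symm, e⟩
    simp [lp.coeFn_single, hne]
  unfold TreeData.cesaro
  rw [this]
  simp

/-- For a vertex `w` of a rooted directed tree, `Λ_T e_w ∈ ℓ²(V)` if and only
if `Σ_j card(Chi^⟨j⟩(w))/(dep w + j + 1)² < ∞`, and in that case `‖Λ_T e_w‖²` equals this sum. -/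
theorem cesaro_single_memℓp_iff {V : Type} [Countable V] [Infinite V] [DecidableEq V]
    (T : TreeData V) (w : V) :
    (Memℓp (T.cesaro ⇑(lp.single 2 w (1 : ℂ) : L2 V)) 2 ↔
      (∀ j : ℕ, (T.chiIter w j).Finite) ∧
        Summable (fun j : ℕ => ((T.chiIter w j).ncard : ℝ) / ((T.dep w : ℝ) + j + 1) ^ 2)) ∧
    ∀ h : Memℓp (T.cesaro ⇑(lp.single 2 w (1 : ℂ) : L2 V)) 2,
      ‖(⟨T.cesaro ⇑(lp.single 2 w (1 : ℂ) : L2 V), h⟩ : L2 V)‖ ^ 2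
        = ∑' j : ℕ, ((T.chiIter w j).ncard : ℝ) / ((T.dep w : ℝ) + j + 1) ^ 2 := by
  have hinj : Function.Injective (fun p : (Σ j : ℕ, T.chiIter w j) => (p.2 : V)) := by
    rintro ⟨i, x, hx⟩ ⟨j, y, hy⟩ e
    dsimp only at e
    subst e
    have : i = j := by
      have h1 := hx.1
      have h2 := hy.1
      omega
    subst this
    rfl
  set f : V → ℝ := fun v => ‖T.cesaro ⇑(lp.single 2 w (1 : ℂ) : L2 V) v‖ ^ 2 with hf
  have hsupp : Function.support f ⊆ Set.range (fun p : (Σ j : ℕ, T.chiIter w j) => (p.2 : V)) := by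
    intro v hv
    by_contra hn
    apply hv
    apply T.cesaro_single_of_notMem
    intro j hj
    exact hn ⟨⟨j, v, hj⟩, rfl⟩
  have hval : ∀ (j : ℕ) (v : T.chiIter w j), f v = (((T.dep w : ℝ) + j + 1) ^ 2)⁻¹ :=
    fun j v => T.cesaro_single_of_mem w v j v.2
  have hpos : ∀ j : ℕ, (((T.dep w : ℝ) + j + 1) ^ 2)⁻¹ ≠ 0 := fun j => by positivity
  have hts : ∀ j : ℕ, ∑' v : T.chiIter w j, f v
      = ((T.chiIter w j).ncard : ℝ) / ((T.dep w : ℝ) + j + 1) ^ 2 := by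
    intro j
    simp_rw [hval]
    rw [tsum_const, nsmul_eq_mul, div_eq_mul_inv]
    rfl
  have hmem : Memℓp (T.cesaro ⇑(lp.single 2 w (1 : ℂ) : L2 V)) 2 ↔ Summable f := by
    rw [memℓp_gen_iff (by norm_num)]
    simp [hf]
  have hsig : Summable f ↔ Summable (fun p : (Σ j : ℕ, T.chiIter w j) => f p.2) := by
    refine (hinj.summable_iff ?_).symm
    intro v hv
    by_contra h0
    exact hv (hsupp h0)
  constructor
  · rw [hmem, hsig, summable_sigma_of_nonneg (fun p => by simp only [hf]; positivity)]
    simp only [hts]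
    refine and_congr_left' (forall_congr' fun j => ?_)
    simp_rw [hval]
    constructor
    · intro hs
      by_contra hn
      have : Infinite (T.chiIter w j) := Set.infinite_coe_iff.2 hn
      exact hpos j ((summable_const_iff _).1 hs)
    · intro hfin
      have := hfin.to_subtype
      exact Summable.of_finite
  · intro h
    have h1 := lp.norm_rpow_eq_tsum (p := 2) (by norm_num)
      (⟨T.cesaro ⇑(lp.single 2 w (1 : ℂ) : L2 V), h⟩ : L2 V)
    have h2 : ‖(⟨T.cesaro ⇑(lp.single 2 w (1 : ℂ) : L2 V), h⟩ : L2 V)‖ ^ 2 = ∑' v, f v := by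
      simpa [hf] using h1
    rw [h2, ← hinj.tsum_eq hsupp, (hsig.1 (hmem.1 h)).tsum_sigma]
    simp only [hts]
end
end

section
/- Let T = (V, root, par) be a narrow rooted directed tree. Then: (1) T is locally finite, i.e. Chi(u) is finite for every u ∈ V, and more generally sup_{j≥0} card(Chi^⟨j⟩(w)) < ∞ for every w ∈ V; and (2) if in addition T is leafless, then T has finite branching index, i.e. the set of depths of branching vertices (vertices with at least two children) is bounded. -/
noncomputable section

open scoped ENNReal

theorem TreeData.dep_par_s16 {V : Type} (T : TreeData V) (v : V) (hv : v ≠ T.root) :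
    T.dep v = T.dep (T.par v) + 1 := by
  classical
  unfold TreeData.dep
  exact Nat.find_comp_succ (T.hroot v) (T.hroot (T.par v)) (by simpa using hv)

theorem TreeData.chi_subset {V : Type} (T : TreeData V) (u : V) :
    T.chi u ⊆ T.level (T.dep u + 1) := by
  rintro v ⟨hv, rfl⟩
  exact T.dep_par_s16 v hv

theorem TreeData.dep_root_s16 {V : Type} (T : TreeData V) : T.dep T.root = 0 := by
  classical
  unfold TreeData.dep
  simp

theorem TreeData.image_level {V : Type} (T : TreeData V) (h : ∀ u : V, (T.chi u).Nonempty)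
    (n : ℕ) : T.par '' T.level (n + 1) = T.level n := by
  ext u
  constructor
  · rintro ⟨v, hv, rfl⟩
    have hv' : T.dep v = n + 1 := hv
    have hr : v ≠ T.root := by
      rintro rfl
      rw [T.dep_root_s16] at hv'
      omega
    have := T.dep_par_s16 v hr
    show T.dep _ = n
    omega
  · intro hu
    obtain ⟨v, hv⟩ := h u
    have h1 := T.chi_subset u hv
    have hu' : T.dep u = n := hu
    rw [hu'] at h1
    exact ⟨v, h1, hv.2⟩

/-- A narrow rooted directed tree is locally finite — indeed
`sup_j card(Chi^⟨j⟩(w)) < ∞` for every vertex `w` — and, if leafless, has finite branching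
index. -/
theorem narrow_locally_finite_and_finite_branching_index {V : Type} [Countable V] [Infinite V]
    (T : TreeData V) (m : ℕ) (hm : ∀ n : ℕ, (T.level n).encard ≤ m) :
    ((∀ u : V, (T.chi u).Finite) ∧
      ∀ w : V, ∃ M : ℕ, ∀ j : ℕ, (T.chiIter w j).encard ≤ M) ∧
    ((∀ u : V, (T.chi u).Nonempty) →
      ∃ B : ℕ, ∀ v : V, T.branching v → T.dep v ≤ B) := by
  have hfin : ∀ n, (T.level n).Finite := fun n =>
    Set.finite_of_encard_le_coe (hm n)
  refine ⟨⟨fun u => (hfin _).subset (T.chi_subset u), fun w => ⟨m, fun j => ?_⟩⟩, fun h => ?_⟩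
  · exact (Set.encard_le_encard (fun v hv => hv.1)).trans (hm (T.dep w + j))
  · have hb : ∀ n, (T.level n).ncard ≤ m := fun n => by
      have := hm n
      rw [← (hfin n).cast_ncard_eq] at this
      exact_mod_cast this
    have hmono : Monotone fun n => (T.level n).ncard := monotone_nat_of_le_succ fun n => by
      rw [← T.image_level h n]
      exact Set.ncard_image_le (hfin _)
    have hbdd : BddAbove (Set.range fun n => (T.level n).ncard) :=
      ⟨m, by rintro _ ⟨n, rfl⟩; exact hb n⟩
    obtain ⟨N, hN⟩ := Nat.sSup_mem (Set.range_nonempty _) hbdd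
    refine ⟨N, fun v hv => ?_⟩
    by_contra! hlt
    have h1 : (T.level (T.dep v + 1)).ncard ≤ (T.level N).ncard := by
      have := le_csSup hbdd ⟨T.dep v + 1, rfl⟩
      rw [← hN] at this
      exact this
    have h2 : (T.level N).ncard ≤ (T.level (T.dep v)).ncard := hmono hlt.le
    have h3 : (T.par '' T.level (T.dep v + 1)).ncard = (T.level (T.dep v + 1)).ncard :=
      le_antisymm (Set.ncard_image_le (hfin _)) (by rw [T.image_level h]; omega)
    have hinj := (Set.ncard_image_iff (hfin _)).1 h3
    have h4 : (T.chi v).encard ≤ 1 := Set.encard_le_one_iff.2 fun a b ha hb' =>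
      hinj (T.chi_subset v ha) (T.chi_subset v hb') (ha.2.trans hb'.2.symm)
    have h5 : (2 : ℕ∞) ≤ 1 := le_trans hv h4
    exact absurd h5 (by decide)
end
end

section
/- There exists a rooted directed tree T = (V, root, par) satisfying card(Chi^⟨n⟩(root)) ≤ n + 1 for every n ≥ 0 (so that sup_{n} card(Chi^⟨n⟩(root))/(n+1) < ∞), together with a function f ∈ ℓ²(V) such that Λ_T f ∉ ℓ²(V) (i.e. Σ_{v∈V} |(Λ_T f)(v)|² = ∞). In particular, the Cesàro map of this tree does not define a bounded operator on ℓ²(V), so the narrowness hypothesis in the boundedness theorem cannot be weakened to linear growth of level cardinalities. -/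
noncomputable section

open scoped ENNReal

def combPar (v : ℕ × ℕ) : ℕ × ℕ := (v.1 - (if v.2 = 0 then 1 else 0), v.2 - 1)

lemma combPar_sum (v : ℕ × ℕ) : (combPar v).1 + (combPar v).2 = v.1 + v.2 - 1 := by
  unfold combPar
  split_ifs with h
  · simp [h]
  · simp only; omega

lemma combPar_iter (n : ℕ) (v : ℕ × ℕ) :
    (combPar^[n] v).1 + (combPar^[n] v).2 = v.1 + v.2 - n := by
  induction n with
  | zero => simp
  | succ n ih => rw [Function.iterate_succ_apply', combPar_sum, ih]; omega

lemma combPar_iter_iff (n : ℕ) (v : ℕ × ℕ) :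
    combPar^[n] v = (0, 0) ↔ v.1 + v.2 ≤ n := by
  have h := combPar_iter n v
  rw [Prod.ext_iff]
  simp only
  omega

def combTree : TreeData (ℕ × ℕ) where
  root := (0, 0)
  par := combPar
  par_root := by simp [combPar]
  hroot := fun v => ⟨v.1 + v.2, (combPar_iter_iff _ v).2 le_rfl⟩

lemma combTree_dep (v : ℕ × ℕ) : combTree.dep v = v.1 + v.2 := by
  unfold TreeData.dep
  refine (@Nat.find_eq_iff _ _ (_) _).2 ?_
  refine ⟨(combPar_iter_iff _ v).2 le_rfl, fun n hn h => ?_⟩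
  have := (combPar_iter_iff n v).1 h
  omega

lemma combTree_cesaro (f : ℕ × ℕ → ℂ) (hf : ∀ v, f v = if v = (0, 0) then 1 else 0)
    (v : ℕ × ℕ) : combTree.cesaro f v = (((v.1 + v.2 : ℕ) : ℂ) + 1)⁻¹ := by
  unfold TreeData.cesaro
  rw [combTree_dep, Finset.sum_eq_single (v.1 + v.2)]
  · have h : combTree.par^[v.1 + v.2] v = (0, 0) := (combPar_iter_iff _ v).2 le_rfl
    rw [hf, if_pos h, mul_one]
  · intro j hj hne
    rw [hf, if_neg]
    intro h
    have := (combPar_iter_iff j v).1 h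
    have := Finset.mem_range.1 hj
    omega
  · simp

lemma comb_not_summable :
    ¬ Summable (fun v : ℕ × ℕ => ((((v.1 + v.2 : ℕ) : ℝ) + 1)⁻¹) ^ 2) := by
  intro h
  have h1 := (Finset.HasAntidiagonal.sigmaAntidiagonalEquivProd (A := ℕ)).summable_iff.2 h
  have h2 := h1.sigma
  have h3 : Summable (fun n : ℕ => 1 / ((n : ℝ) + 1)) := by
    refine h2.congr fun n => ?_
    have : ∀ c : Finset.HasAntidiagonal.antidiagonal n,
        ((fun v : ℕ × ℕ => ((((v.1 + v.2 : ℕ) : ℝ) + 1)⁻¹) ^ 2) ∘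
          Finset.HasAntidiagonal.sigmaAntidiagonalEquivProd) ⟨n, c⟩ = (((n : ℝ) + 1)⁻¹) ^ 2 := by
      rintro ⟨c, hc⟩
      simp [Finset.HasAntidiagonal.sigmaAntidiagonalEquivProd, ← Finset.HasAntidiagonal.mem_antidiagonal.1 hc]
    rw [tsum_congr this, tsum_fintype]
    have : (n : ℝ) + 1 ≠ 0 := by positivity
    simp
    field_simp
  have h4 := (summable_nat_add_iff (f := fun n : ℕ => 1 / (n : ℝ)) 1).1 (by simpa using h3)
  exact Real.not_summable_one_div_natCast h4

/-- There is a rooted directed tree whose `n`-th level has at most `n + 1`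
vertices, together with an `f ∈ ℓ²(V)` with `Λ_T f ∉ ℓ²(V)`: linear growth of level
cardinalities does not suffice for boundedness of the Cesàro map. -/
theorem exists_tree_linear_levels_cesaro_unbounded :
    ∃ (V : Type) (T : TreeData V), Countable V ∧ Infinite V ∧
      (∀ n : ℕ, (T.level n).encard ≤ n + 1) ∧
      ∃ f : L2 V, ¬ Memℓp (T.cesaro ⇑f) 2 := by
  refine ⟨ℕ × ℕ, combTree, inferInstance, inferInstance, fun n => ?_,
    lp.single 2 (0, 0) (1 : ℂ), fun h => ?_⟩
  · have : combTree.level n = ↑(Finset.HasAntidiagonal.antidiagonal n) := by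
      ext v
      simp [TreeData.level, combTree_dep]
    rw [this, Set.encard_coe_eq_coe_finsetCard, Finset.Nat.card_antidiagonal]
    simp
  · have h1 := (memℓp_gen_iff (by simp)).1 h
    apply comb_not_summable
    refine h1.congr fun v => ?_
    rw [combTree_cesaro]
    · simp only [norm_inv, ENNReal.toReal_ofNat, Real.rpow_ofNat]
      congr 2
      rw [← Nat.cast_succ, ← Nat.cast_succ, Complex.norm_natCast]
    · intro w
      simp [lp.single_apply, Pi.single_apply]
end
end
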